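/- Energy conservation for the post-collisional momenta: for all p̄, q̄ ∈ ℝ³ and all ω ∈ ℝ³ with |ω| = 1 (unit length for the metric norm), one has e² − (ω·(p̄+q̄))² > 0, and setting c = 2p⁰q⁰e·ω·(q̄/q⁰ − p̄/p⁰)/(e² − (ω·(p̄+q̄))²), p̄′ = p̄ + cω and q̄′ = q̄ − cω, the total momentum and the total energy are conserved: p̄′ + q̄′ = p̄ + q̄ and √(1+|p̄′|²) + √(1+|q̄′|²) = √(1+|p̄|²) + √(1+|q̄|²). -/

import Mathlib

/-!
Write `P, Q` for the energies of `p, q`, `e = P + Q`, `x = ω·p`, `y = ω·q`, `s = x + y`.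
The defining equation of `c` is `c (e² - s²) = 2 e (P y - Q x)`. Putting `δ = c s / e`, this
implies `(P + δ)² = 1 + |p + cω|²` and `(Q - δ)² = 1 + |q - cω|²`, so the
post-collisional energies are `|P + δ|` and `|Q - δ|`, and the energy is conserved once both
numbers are shown to be nonnegative (they sum to `e`).

The sign is settled by the reverse Cauchy–Schwarz inequality `1 + |p·q| ≤ p⁰ q⁰`
(`one_add_abs_mdot_le`): conservation of `e² - |p + q|²` gives
`(P + δ)(Q - δ) ≥ 1 + p'·q'`, whereas opposite signs would give
`(P + δ)(Q - δ) = -p'⁰ q'⁰ ≤ p'·q' - 1`. The same inequality, together with Cauchy–Schwarz for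
`ω`, yields `s² ≤ |p + q|² < e²`.
-/

open MeasureTheory Real

noncomputable section

/-- Momentum space `ℝ³`. -/
abbrev E3 : Type := EuclideanSpace ℝ (Fin 3)

/-- The scalar product associated with the Bianchi type I metric coefficients `α = a(t)`,
`β = b(t)`: `p̄·q̄ = α²p¹q¹ + β²(p²q² + p³q³)`. -/
def mdot (α β : ℝ) (p q : E3) : ℝ :=
  α ^ 2 * p 0 * q 0 + β ^ 2 * (p 1 * q 1 + p 2 * q 2)

/-- `p⁰ = √(1 + |p̄|²)` where `|p̄|² = p̄·p̄`. -/
def pZ (α β : ℝ) (p : E3) : ℝ := Real.sqrt (1 + mdot α β p p)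

/-- `ω` normalized to unit length for the metric norm. -/
def omHat (α β : ℝ) (ω : E3) : E3 := (Real.sqrt (mdot α β ω ω))⁻¹ • ω

/-- The total energy `e = p⁰ + q⁰`. -/
def collE (α β : ℝ) (p q : E3) : ℝ := pZ α β p + pZ α β q

/-- The function `C(p̄, q̄, ω)` of Glassey's representation of post-collisional momenta. -/
def collC (α β : ℝ) (p q ω : E3) : ℝ :=
  2 * pZ α β p * pZ α β q * collE α β p q *
      mdot α β (omHat α β ω) ((pZ α β q)⁻¹ • q - (pZ α β p)⁻¹ • p) /
    (collE α β p q ^ 2 - mdot α β (omHat α β ω) (p + q) ^ 2)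

/-- The post-collisional momentum `p̄′ = p̄ + C(p̄,q̄,ω)ω̂`. -/
def pPr (α β : ℝ) (p q ω : E3) : E3 := p + collC α β p q ω • omHat α β ω

/-- The post-collisional momentum `q̄′ = q̄ − C(p̄,q̄,ω)ω̂`. -/
def qPr (α β : ℝ) (p q ω : E3) : E3 := q - collC α β p q ω • omHat α β ω

/-- The surface measure on the unit sphere `S² ⊂ ℝ³`. -/
def sphMeas : Measure (Metric.sphere (0 : E3) 1) := (volume : Measure E3).toSphere

/-- The gain term `Q⁺(f,g)`. -/
def Qplus (α β : ℝ) (S₀ : E3 → E3 → E3 → E3 → ℝ) (f g : E3 → ℝ) (p : E3) : ℝ :=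
  α * β ^ 2 *
    ∫ q : E3, (pZ α β q)⁻¹ *
      ∫ ω : Metric.sphere (0 : E3) 1,
        f (pPr α β p q ω) * g (qPr α β p q ω) *
          S₀ p q (pPr α β p q ω) (qPr α β p q ω) ∂sphMeas

/-- The loss term `Q⁻(f,g)`. -/
def Qminus (α β : ℝ) (S₀ : E3 → E3 → E3 → E3 → ℝ) (f g : E3 → ℝ) (p : E3) : ℝ :=
  α * β ^ 2 *
    ∫ q : E3, (pZ α β q)⁻¹ *
      ∫ ω : Metric.sphere (0 : E3) 1,
        f p * g q * S₀ p q (pPr α β p q ω) (qPr α β p q ω) ∂sphMeas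

/-- The collision operator `Q = Q⁺ − Q⁻`. -/
def Qcoll (α β : ℝ) (S₀ : E3 → E3 → E3 → E3 → ℝ) (f g : E3 → ℝ) (p : E3) : ℝ :=
  Qplus α β S₀ f g p - Qminus α β S₀ f g p

/-- The space `L¹(ℝ³)`. -/
abbrev L1 : Type := Lp ℝ 1 (volume : Measure E3)

/-- Membership in `X_r = {f ∈ L¹(ℝ³) : f ≥ 0 a.e., ‖f‖ ≤ r}`. -/
def memX (r : ℝ) (f : L1) : Prop := (0 ≤ᵐ[volume] ⇑f) ∧ ‖f‖ ≤ r

end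

lemma mdot_self_nonneg (α β : ℝ) (p : E3) : 0 ≤ mdot α β p p := by
  have : mdot α β p p = (α * p 0) ^ 2 + ((β * p 1) ^ 2 + (β * p 2) ^ 2) := by
    unfold mdot; ring
  rw [this]; positivity

lemma mdot_add_smul_self (α β c : ℝ) (p q : E3) :
    mdot α β (p + c • q) (p + c • q)
      = mdot α β p p + 2 * c * mdot α β p q + c ^ 2 * mdot α β q q := by
  simp [mdot]; ring

lemma mdot_cauchy_schwarz (α β : ℝ) (p q : E3) :
    mdot α β p q ^ 2 ≤ mdot α β p p * mdot α β q q := by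
  have h : mdot α β p p * mdot α β q q - mdot α β p q ^ 2
      = (α * β * (p 0 * q 1 - p 1 * q 0)) ^ 2 + (α * β * (p 0 * q 2 - p 2 * q 0)) ^ 2
        + (β ^ 2 * (p 1 * q 2 - p 2 * q 1)) ^ 2 := by
    unfold mdot; ring
  have : 0 ≤ mdot α β p p * mdot α β q q - mdot α β p q ^ 2 := by rw [h]; positivity
  linarith

lemma pZ_sq (α β : ℝ) (p : E3) : pZ α β p ^ 2 = 1 + mdot α β p p :=
  Real.sq_sqrt (by linarith [mdot_self_nonneg α β p])

lemma pZ_pos (α β : ℝ) (p : E3) : 0 < pZ α β p :=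
  Real.sqrt_pos.2 (by linarith [mdot_self_nonneg α β p])

/-- Reverse Cauchy–Schwarz inequality for unit future-directed timelike vectors. -/
lemma one_add_abs_mdot_le (α β : ℝ) (p q : E3) :
    1 + |mdot α β p q| ≤ pZ α β p * pZ α β q := by
  have h1 := mdot_add_smul_self α β 1 p q
  have h2 := mdot_add_smul_self α β (-1) p q
  have h3 := mdot_self_nonneg α β (p + (1 : ℝ) • q)
  have h4 := mdot_self_nonneg α β (p + (-1 : ℝ) • q)
  have h5 := mdot_cauchy_schwarz α β p q
  have h6 : 2 * |mdot α β p q| ≤ mdot α β p p + mdot α β q q := by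
    rcases abs_cases (mdot α β p q) with h | h <;> linarith
  refine abs_le_of_sq_le_sq' ?_ (mul_pos (pZ_pos α β p) (pZ_pos α β q)).le |>.2
  rw [mul_pow, pZ_sq, pZ_sq]
  nlinarith [sq_abs (mdot α β p q)]

theorem statement_16
    (α β : ℝ) (hα : 0 < α) (hβ : 0 < β) (p q ω : E3) (hω : mdot α β ω ω = 1) :
    0 < collE α β p q ^ 2 - mdot α β ω (p + q) ^ 2 ∧
    ∀ c : ℝ,
      c = 2 * pZ α β p * pZ α β q * collE α β p q *
            mdot α β ω ((pZ α β q)⁻¹ • q - (pZ α β p)⁻¹ • p) /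
          (collE α β p q ^ 2 - mdot α β ω (p + q) ^ 2) →
      (p + c • ω) + (q - c • ω) = p + q ∧
      pZ α β (p + c • ω) + pZ α β (q - c • ω) = pZ α β p + pZ α β q := by
  have hP := pZ_pos α β p
  have hQ := pZ_pos α β q
  have hP2 := pZ_sq α β p
  have hQ2 := pZ_sq α β q
  have hk := one_add_abs_mdot_le α β p q
  have hk' := le_abs_self (mdot α β p q)
  have hpos : 0 < collE α β p q ^ 2 - mdot α β ω (p + q) ^ 2 := by
    have h1 := mdot_cauchy_schwarz α β ω (p + q)
    have h2 := mdot_add_smul_self α β 1 p q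
    rw [one_smul] at h2
    rw [hω, one_mul, h2] at h1
    unfold collE
    nlinarith
  refine ⟨hpos, fun c hc => ⟨by abel, ?_⟩⟩
  have hs : mdot α β ω (p + q) = mdot α β p ω + mdot α β q ω := by
    simp [mdot]; ring
  have hd : pZ α β p * pZ α β q * mdot α β ω ((pZ α β q)⁻¹ • q - (pZ α β p)⁻¹ • p)
      = pZ α β p * mdot α β q ω - pZ α β q * mdot α β p ω := by
    simp [mdot]; field_simp; ring
  rw [eq_div_iff hpos.ne'] at hc
  have hp' := mdot_add_smul_self α β c p ω
  have hq' := mdot_add_smul_self α β (-c) q ω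
  have hpq' : mdot α β (p + c • ω) (q - c • ω)
      = mdot α β p q + c * (mdot α β q ω - mdot α β p ω) - c ^ 2 * mdot α β ω ω := by
    simp [mdot]; ring
  rw [neg_smul, ← sub_eq_add_neg] at hq'
  rw [hω] at hp' hq' hpq'
  have hA2 := pZ_sq α β (p + c • ω)
  have hB2 := pZ_sq α β (q - c • ω)
  have hA := pZ_pos α β (p + c • ω)
  have hB := pZ_pos α β (q - c • ω)
  have hk2 := one_add_abs_mdot_le α β (p + c • ω) (q - c • ω)
  have hk2' := neg_abs_le (mdot α β (p + c • ω) (q - c • ω))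
  rw [hp'] at hA2
  rw [hq'] at hB2
  rw [hpq'] at hk2 hk2'
  have hc' : c * ((pZ α β p + pZ α β q) ^ 2 - (mdot α β p ω + mdot α β q ω) ^ 2)
      = 2 * (pZ α β p + pZ α β q)
        * (pZ α β p * mdot α β q ω - pZ α β q * mdot α β p ω) := by
    rw [← hd, ← hs]; unfold collE at hc; linarith
  clear hc hd hs hpos hp' hq' hpq'
  generalize pZ α β (p + c • ω) = A at *
  generalize pZ α β (q - c • ω) = B at *
  generalize pZ α β p = P at *
  generalize pZ α β q = Q at *
  generalize mdot α β p ω = x at *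
  generalize mdot α β q ω = y at *
  generalize mdot α β p q = k at *
  have he : 0 < P + Q := by linarith
  obtain ⟨δ, hδ⟩ : ∃ δ, δ * (P + Q) = c * (x + y) :=
    ⟨c * (x + y) / (P + Q), div_mul_cancel₀ _ he.ne'⟩
  have hA' : (P + δ) ^ 2 = A ^ 2 := by
    have : (P + Q) ^ 2 * ((P + δ) ^ 2 - A ^ 2) = 0 := by
      have e1 : (P + δ) ^ 2 - A ^ 2 = 2 * P * δ + δ ^ 2 - 2 * c * x - c ^ 2 := by linarith
      rw [e1]
      linear_combination (2 * P * (P + Q) + δ * (P + Q) + c * (x + y)) * hδ - c * hc'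
    have := (mul_eq_zero.1 this).resolve_left (by positivity)
    linarith
  have hB' : (Q - δ) ^ 2 = B ^ 2 := by
    linear_combination hA' + hA2 - hB2 - hP2 + hQ2 - 2 * hδ
  -- Conservation of `e² - |p + q|²`.
  have hinv : (P + δ) * (Q - δ) - (k + c * (y - x) - c ^ 2) = P * Q - k := by
    linear_combination (-1/2 : ℝ) * hA' - (1/2 : ℝ) * hB' - (1/2 : ℝ) * hA2
      - (1/2 : ℝ) * hB2 + (1/2 : ℝ) * hP2 + (1/2 : ℝ) * hQ2
  rcases sq_eq_sq_iff_eq_or_eq_neg.1 hA' with h1 | h1 <;>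
    rcases sq_eq_sq_iff_eq_or_eq_neg.1 hB' with h2 | h2
  · linarith
  · rw [h1, h2] at hinv; linarith
  · rw [h1, h2] at hinv; linarith
  · linarith
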